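/- arXiv:2604.24728 — 8 statements merged into one kernel-verified Lean document; each statement's English description precedes it below -/
import Mathlib

section
/- Let (X, p, θ) be a 0-complete partial extended b-metric space and let T : X → X satisfy p(Tx, Ty) ≤ k·p(x,y) for all x,y ∈ X, where k ∈ [0,1). Suppose that for each x₀ ∈ X, writing xₙ = Tⁿx₀, one has lim sup_{n,m→∞} θ(xₙ, xₘ) < 1/k (i.e., there is c with k·c < 1 such that θ(xₙ, xₘ) ≤ c for all sufficiently large n, m). Then T has exactly one fixed point u ∈ X, and moreover for each y ∈ X the iterates Tⁿy converge to u in the sense that lim_{n→∞} p(Tⁿy, u) = 0. -/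
open Filter Topology

/-- Iterating a `k`-contraction of `p` contracts `p` by the factor `k ^ n`. -/
lemma iterate_contraction_le {X : Type*} {p : X → X → ℝ} {T : X → X} {k : ℝ} (hk0 : 0 ≤ k)
    (hT : ∀ x y, p (T x) (T y) ≤ k * p x y) (n : ℕ) (x y : X) :
    p (T^[n] x) (T^[n] y) ≤ k ^ n * p x y := by
  induction n with
  | zero => simp
  | succ n ih =>
    rw [Function.iterate_succ_apply', Function.iterate_succ_apply', pow_succ', mul_assoc]
    exact (hT _ _).trans (mul_le_mul_of_nonneg_left ih hk0)

/-- If `θ` is bounded by `c` along the orbit of `a` and `k * c < 1`, then the orbit of `a` stays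
within bounded `p`-distance of `a`. -/
lemma exists_bound_orbit {X : Type*} {p θ : X → X → ℝ} (hθ : ∀ x y, 1 ≤ θ x y)
    (hp_nonneg : ∀ x y, 0 ≤ p x y) (hP2 : ∀ x y, p x x ≤ p x y)
    (hP4 : ∀ x y z, p x z ≤ θ x z * (p x y + p y z) - p y y)
    {T : X → X} {k : ℝ} (hT : ∀ x y, p (T x) (T y) ≤ k * p x y)
    {a : X} {c : ℝ} (hc : k * c < 1) (hk0 : 0 ≤ k) (hθc : ∀ m : ℕ, θ a (T^[m] a) ≤ c) :
    ∃ B, ∀ m : ℕ, p a (T^[m] a) ≤ B := by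
  have hc1 : 1 ≤ c := (hθ _ _).trans (hθc 0)
  have hd := hp_nonneg a (T a)
  refine ⟨c * p a (T a) / (1 - k * c), fun m => ?_⟩
  rw [le_div_iff₀ (by linarith)]
  induction m with
  | zero =>
    have h0 := hp_nonneg a a
    have hkc : 0 ≤ k * c := by positivity
    have := hP2 a (T a)
    simp only [Function.iterate_zero, id]
    nlinarith [mul_nonneg hkc h0, mul_nonneg (sub_nonneg.2 hc1) hd]
  | succ m ih =>
    have h4 := hP4 a (T a) (T^[m + 1] a)
    have hθm := hθc (m + 1)
    rw [Function.iterate_succ_apply'] at h4 hθm ⊢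
    have hle : p a (T (T^[m] a)) ≤ c * (p a (T a) + k * p a (T^[m] a)) := by
      refine (h4.trans (sub_le_self _ (hp_nonneg _ _))).trans ?_
      exact mul_le_mul hθm (by linarith [hT a (T^[m] a)])
        (add_nonneg hd (hp_nonneg _ _)) (by linarith)
    have hkc : 0 ≤ k * c := by positivity
    nlinarith [mul_le_mul_of_nonneg_left ih hkc,
      mul_le_mul_of_nonneg_right hle (sub_nonneg.2 hc.le)]

/-- An orbit of a contraction that stays within bounded `p`-distance of its starting point is
0-Cauchy. -/
lemma tendsto_orbit_zero {X : Type*} {p : X → X → ℝ} (hp_nonneg : ∀ x y, 0 ≤ p x y)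
    (hP3 : ∀ x y, p x y = p y x) {T : X → X} {k : ℝ} (hk0 : 0 ≤ k) (hk1 : k < 1)
    (hT : ∀ x y, p (T x) (T y) ≤ k * p x y) {a : X} {B : ℝ} (hB : ∀ m : ℕ, p a (T^[m] a) ≤ B) :
    Tendsto (fun nm : ℕ × ℕ => p (T^[nm.1] a) (T^[nm.2] a)) atTop (𝓝 0) := by
  have hB0 : 0 ≤ B := (hp_nonneg _ _).trans (hB 0)
  have key : ∀ n j : ℕ, p (T^[n] a) (T^[n + j] a) ≤ k ^ n * B := fun n j => by
    rw [Function.iterate_add_apply]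
    exact (iterate_contraction_le hk0 hT n _ _).trans
      (mul_le_mul_of_nonneg_left (hB j) (by positivity))
  have hlim : Tendsto (fun n : ℕ => k ^ n * B) atTop (𝓝 0) := by
    simpa using (tendsto_pow_atTop_nhds_zero_of_lt_one hk0 hk1).mul_const B
  have hsum : Tendsto (fun nm : ℕ × ℕ => k ^ nm.1 * B + k ^ nm.2 * B) atTop (𝓝 0) := by
    rw [← prod_atTop_atTop_eq]
    simpa using (hlim.comp tendsto_fst).add (hlim.comp tendsto_snd)
  refine squeeze_zero (fun _ => hp_nonneg _ _) (fun ⟨n, m⟩ => ?_) hsum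
  have hn : 0 ≤ k ^ n * B := by positivity
  have hm : 0 ≤ k ^ m * B := by positivity
  rcases le_total n m with h | h
  · obtain ⟨j, rfl⟩ := Nat.exists_eq_add_of_le h
    exact (key n j).trans (by linarith)
  · obtain ⟨j, rfl⟩ := Nat.exists_eq_add_of_le h
    dsimp only
    rw [hP3]
    exact (key m j).trans (by linarith)

/-- Banach-type fixed point theorem in a 0-complete partial
extended b-metric space. -/
theorem pebms_banach_fixed_point
    {X : Type*} [Nonempty X]
    (p : X → X → ℝ) (θ : X → X → ℝ)
    (hθ : ∀ x y, 1 ≤ θ x y)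
    (hp_nonneg : ∀ x y, 0 ≤ p x y)
    (hP1 : ∀ x y, (p x x = p x y ∧ p x y = p y y) ↔ x = y)
    (hP2 : ∀ x y, p x x ≤ p x y)
    (hP3 : ∀ x y, p x y = p y x)
    (hP4 : ∀ x y z, p x z ≤ θ x z * (p x y + p y z) - p y y)
    (hcomp : ∀ s : ℕ → X,
      Tendsto (fun nm : ℕ × ℕ => p (s nm.1) (s nm.2)) atTop (𝓝 0) →
      ∃ u : X, Tendsto (fun n => p (s n) u) atTop (𝓝 0) ∧ p u u = 0)
    (T : X → X) (k : ℝ) (hk0 : 0 ≤ k) (hk1 : k < 1)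
    (hT : ∀ x y, p (T x) (T y) ≤ k * p x y)
    (hθlim : ∀ x₀ : X, ∃ c : ℝ, k * c < 1 ∧
      ∃ N : ℕ, ∀ n ≥ N, ∀ m ≥ N, θ (T^[n] x₀) (T^[m] x₀) ≤ c) :
    ∃ u : X, T u = u ∧ (∀ v : X, T v = v → v = u) ∧
      ∀ y : X, Tendsto (fun n => p (T^[n] y) u) atTop (𝓝 0) := by
  have eq_of_zero : ∀ x y, p x y = 0 → x = y := fun x y h => by
    have hx := hP2 x y
    have hy := hP2 y x
    rw [hP3 y x] at hy
    exact (hP1 x y).1 ⟨by linarith [hp_nonneg x x], by linarith [hp_nonneg y y]⟩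
  obtain ⟨x₀⟩ := ‹Nonempty X›
  obtain ⟨c, hc, N, hN⟩ := hθlim x₀
  obtain ⟨B, hB⟩ := exists_bound_orbit (a := T^[N] x₀) hθ hp_nonneg hP2 hP4 hT hc hk0
    fun m => by
      rw [← Function.iterate_add_apply]
      exact hN N le_rfl _ (Nat.le_add_left N m)
  obtain ⟨u, hu, -⟩ := hcomp (fun n => T^[n] (T^[N] x₀))
    (tendsto_orbit_zero hp_nonneg hP3 hk0 hk1 hT hB)
  set a := T^[N] x₀
  have hfix : T u = u := by
    refine (eq_of_zero u (T u) (le_antisymm ?_ (hp_nonneg _ _))).symm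
    have hlim : Tendsto (fun n => θ u (T u) * (p (T^[n + 1] a) u + k * p (T^[n] a) u))
        atTop (𝓝 0) := by
      simpa using (((tendsto_add_atTop_iff_nat 1).2 hu).add (hu.const_mul k)).const_mul (θ u (T u))
    refine ge_of_tendsto' hlim fun n => ?_
    refine ((hP4 u (T^[n + 1] a) (T u)).trans (sub_le_self _ (hp_nonneg _ _))).trans ?_
    refine mul_le_mul_of_nonneg_left ?_ (zero_le_one.trans (hθ _ _))
    rw [hP3 u, Function.iterate_succ_apply']
    exact add_le_add le_rfl (hT _ _)
  refine ⟨u, hfix, fun v hv => eq_of_zero v u ?_, fun y => ?_⟩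
  · have h := hT v u
    rw [hv, hfix] at h
    nlinarith [hp_nonneg v u]
  · refine squeeze_zero (fun _ => hp_nonneg _ _) (fun n => ?_)
      (g := fun n => k ^ n * p y u)
      (by simpa using (tendsto_pow_atTop_nhds_zero_of_lt_one hk0 hk1).mul_const (p y u))
    simpa only [Function.iterate_fixed hfix] using iterate_contraction_le hk0 hT n y u
end

section
/- Let (X, p, θ) be a 0-complete partial extended b-metric space and let T : X → X satisfy the Kannan-type condition p(Tx, Ty) ≤ k[p(x, Tx) + p(y, Ty)] for all x,y ∈ X, where k ∈ [0, 1/2), together with θ(Tx, x) < 1/k for all x ∈ X. Then T has a unique fixed point u ∈ X; moreover p(u,u) = 0 and for every x₀ ∈ X, lim_{n→∞} p(Tⁿx₀, u) = 0. -/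
open Filter Topology

/-- Successive distances along the orbit of a Kannan-type map tend to zero. -/
theorem tendsto_orbit_step_of_kannan {X : Type*} {p : X → X → ℝ}
    (hp_nonneg : ∀ x y, 0 ≤ p x y) {T : X → X} {k : ℝ} (hk0 : 0 ≤ k) (hk1 : k < 1 / 2)
    (hT : ∀ x y, p (T x) (T y) ≤ k * (p x (T x) + p y (T y))) (x : X) :
    Tendsto (fun n => p (T^[n] x) (T (T^[n] x))) atTop (𝓝 0) := by
  have hk : 0 < 1 - k := by linarith
  have hr0 : 0 ≤ k / (1 - k) := by positivity
  have hr1 : k / (1 - k) < 1 := by rw [div_lt_one hk]; linarith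
  have hstep : ∀ y, p (T y) (T (T y)) ≤ k / (1 - k) * p y (T y) := by
    intro y
    rw [div_mul_eq_mul_div, le_div_iff₀ hk]
    linarith [hT y (T y)]
  have hgeom : ∀ n, p (T^[n] x) (T (T^[n] x)) ≤ (k / (1 - k)) ^ n * p x (T x) := by
    intro n
    induction n with
    | zero => simp
    | succ n ih =>
      rw [Function.iterate_succ_apply', pow_succ', mul_assoc]
      exact (hstep _).trans (mul_le_mul_of_nonneg_left ih hr0)
  refine squeeze_zero (fun n => hp_nonneg _ _) hgeom ?_
  simpa using (tendsto_pow_atTop_nhds_zero_of_lt_one hr0 hr1).mul_const (p x (T x))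

/-- Kannan-type fixed point theorem in a 0-complete partial
extended b-metric space.  The condition `θ(Tx,x) < 1/k` is rendered as
`k * θ(Tx,x) < 1` (equivalent for `k > 0`, and correct for `k = 0` where
`1/k = ∞`). -/
theorem pebms_kannan_fixed_point
    {X : Type*} [Nonempty X]
    (p : X → X → ℝ) (θ : X → X → ℝ)
    (hθ : ∀ x y, 1 ≤ θ x y)
    (hp_nonneg : ∀ x y, 0 ≤ p x y)
    (hP1 : ∀ x y, (p x x = p x y ∧ p x y = p y y) ↔ x = y)
    (hP2 : ∀ x y, p x x ≤ p x y)
    (hP3 : ∀ x y, p x y = p y x)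
    (hP4 : ∀ x y z, p x z ≤ θ x z * (p x y + p y z) - p y y)
    (hcomp : ∀ s : ℕ → X,
      Tendsto (fun nm : ℕ × ℕ => p (s nm.1) (s nm.2)) atTop (𝓝 0) →
      ∃ u : X, Tendsto (fun n => p (s n) u) atTop (𝓝 0) ∧ p u u = 0)
    (T : X → X) (k : ℝ) (hk0 : 0 ≤ k) (hk1 : k < 1/2)
    (hT : ∀ x y, p (T x) (T y) ≤ k * (p x (T x) + p y (T y)))
    (hθT : ∀ x : X, k * θ (T x) x < 1) :
    ∃ u : X, T u = u ∧ p u u = 0 ∧ (∀ v : X, T v = v → v = u) ∧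
      ∀ x₀ : X, Tendsto (fun n => p (T^[n] x₀) u) atTop (𝓝 0) := by
  have hstep := tendsto_orbit_step_of_kannan hp_nonneg hk0 hk1 hT
  obtain ⟨a⟩ := ‹Nonempty X›
  obtain ⟨u, hlim, huu⟩ := hcomp (fun n => T^[n + 1] a) (by
    refine squeeze_zero (fun _ => hp_nonneg _ _)
      (g := fun nm : ℕ × ℕ => k * (p (T^[nm.1] a) (T (T^[nm.1] a)) +
        p (T^[nm.2] a) (T (T^[nm.2] a)))) (fun nm => ?_) ?_
    · simp only [Function.iterate_succ_apply']
      exact hT _ _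
    · rw [← prod_atTop_atTop_eq]
      simpa using
        (((hstep a).comp tendsto_fst).add ((hstep a).comp tendsto_snd)).const_mul k)
  have hTu0 : p (T u) u = 0 := by
    have hbound : ∀ n, p (T u) u ≤ θ (T u) u *
        (k * (p (T u) u + p (T^[n] a) (T (T^[n] a))) + p (T^[n + 1] a) u) := by
      intro n
      have hcontr := hT u (T^[n] a)
      rw [← Function.iterate_succ_apply' T n a, hP3 u (T u)] at hcontr
      rw [← Function.iterate_succ_apply' T n a]
      calc p (T u) u
          ≤ θ (T u) u * (p (T u) (T^[n + 1] a) + p (T^[n + 1] a) u) :=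
            (hP4 _ (T^[n + 1] a) _).trans (sub_le_self _ (hp_nonneg _ _))
        _ ≤ _ := mul_le_mul_of_nonneg_left (by linarith) (by linarith [hθ (T u) u])
    have hle := ge_of_tendsto'
      (((((hstep a).const_add (p (T u) u)).const_mul k).add hlim).const_mul (θ (T u) u)) hbound
    nlinarith [hp_nonneg (T u) u, hθT u]
  have hTu : T u = u := by
    have hself : p (T u) (T u) = 0 :=
      le_antisymm (hTu0 ▸ hP2 (T u) u) (hp_nonneg _ _)
    exact (hP1 _ _).1 ⟨hself.trans hTu0.symm, hTu0.trans huu.symm⟩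
  refine ⟨u, hTu, huu, fun v hv => ?_, fun x => ?_⟩
  · have hvv : p v v = 0 := by
      have := hT v v
      rw [hv] at this
      nlinarith [hp_nonneg v v]
    have hvu : p v u = 0 := by
      have := hT v u
      rw [hv, hTu, hvv, huu] at this
      linarith [hp_nonneg v u]
    exact (hP1 _ _).1 ⟨hvv.trans hvu.symm, hvu.trans huu.symm⟩
  · rw [← tendsto_add_atTop_iff_nat 1]
    refine squeeze_zero (fun _ => hp_nonneg _ _)
      (g := fun n => k * p (T^[n] x) (T (T^[n] x))) (fun n => ?_) ?_
    · have := hT (T^[n] x) u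
      rw [hTu, huu, add_zero] at this
      rwa [Function.iterate_succ_apply']
    · simpa using (hstep x).const_mul k
end

section
/- Let (X, p, θ) be a 0-complete partial extended b-metric space and let T : X → X satisfy p(Tx, Ty) ≤ k[p(x, Ty) + p(y, Ty)] for all x,y ∈ X, where k ∈ [0, 1/2), together with θ(Tx, x) < 1/k for all x ∈ X. If there exists x₀ ∈ X such that lim_{n→∞} n·p(Tⁿx₀, Tⁿx₀) = 0, then T has a unique fixed point u ∈ X; moreover p(u,u) = 0 and lim_{n→∞} p(Tⁿx₀, u) = 0. -/
open Filter Topology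

/-- Modified Kannan-type fixed point theorem in a 0-complete
partial extended b-metric space, under the assumption
`lim_{n→∞} n·p(Tⁿx₀, Tⁿx₀) = 0` for some `x₀`.  The condition
`θ(Tx,x) < 1/k` is rendered as `k * θ(Tx,x) < 1`. -/
theorem pebms_modified_kannan_fixed_point
    {X : Type*} [Nonempty X]
    (p : X → X → ℝ) (θ : X → X → ℝ)
    (hθ : ∀ x y, 1 ≤ θ x y)
    (hp_nonneg : ∀ x y, 0 ≤ p x y)
    (hP1 : ∀ x y, (p x x = p x y ∧ p x y = p y y) ↔ x = y)
    (hP2 : ∀ x y, p x x ≤ p x y)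
    (hP3 : ∀ x y, p x y = p y x)
    (hP4 : ∀ x y z, p x z ≤ θ x z * (p x y + p y z) - p y y)
    (hcomp : ∀ s : ℕ → X,
      Tendsto (fun nm : ℕ × ℕ => p (s nm.1) (s nm.2)) atTop (𝓝 0) →
      ∃ u : X, Tendsto (fun n => p (s n) u) atTop (𝓝 0) ∧ p u u = 0)
    (T : X → X) (k : ℝ) (hk0 : 0 ≤ k) (hk1 : k < 1/2)
    (hT : ∀ x y, p (T x) (T y) ≤ k * (p x (T y) + p y (T y)))
    (hθT : ∀ x : X, k * θ (T x) x < 1)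
    (x₀ : X)
    (hx₀ : Tendsto (fun n : ℕ => (n : ℝ) * p (T^[n] x₀) (T^[n] x₀)) atTop (𝓝 0)) :
    ∃ u : X, T u = u ∧ p u u = 0 ∧ (∀ v : X, T v = v → v = u) ∧
      Tendsto (fun n => p (T^[n] x₀) u) atTop (𝓝 0) := by
  have hstep : ∀ n, T (T^[n] x₀) = T^[n + 1] x₀ := fun n =>
    (Function.iterate_succ_apply' T n x₀).symm
  set a : ℕ → ℝ := fun n => p (T^[n] x₀) (T^[n + 1] x₀) with ha
  have ha_nonneg : ∀ n, 0 ≤ a n := fun n => hp_nonneg _ _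
  -- The second slot of the contraction is the older iterate, so self-distances absorb into `a n`.
  have ha_succ : ∀ n, a (n + 1) ≤ 2 * k * a n := by
    intro n
    have h1 := hT (T^[n + 1] x₀) (T^[n] x₀)
    rw [hstep, hstep, hP3 (T^[n + 1 + 1] x₀)] at h1
    have h2 := hP2 (T^[n + 1] x₀) (T^[n] x₀)
    rw [hP3 _ (T^[n] x₀)] at h2
    have h3 := mul_le_mul_of_nonneg_left h2 hk0
    simp only [ha]
    linarith
  have ha_geom : ∀ n, a n ≤ (2 * k) ^ n * a 0 := by
    intro n
    induction n with
    | zero => simp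
    | succ n ih =>
      calc a (n + 1) ≤ 2 * k * a n := ha_succ n
        _ ≤ 2 * k * ((2 * k) ^ n * a 0) := by gcongr
        _ = (2 * k) ^ (n + 1) * a 0 := by ring
  have ha_lim : Tendsto a atTop (𝓝 0) := by
    refine squeeze_zero ha_nonneg ha_geom ?_
    simpa using (tendsto_pow_atTop_nhds_zero_of_lt_one (by linarith : 0 ≤ 2 * k)
      (by linarith)).mul_const (a 0)
  have horbit : ∀ m j, p (T^[m + 1 + j] x₀) (T^[m + 1] x₀) ≤ a m := by
    intro m j
    induction j with
    | zero => simpa [ha, hP3] using hP2 (T^[m + 1] x₀) (T^[m] x₀)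
    | succ j ih =>
      have h1 := hT (T^[m + 1 + j] x₀) (T^[m] x₀)
      rw [hstep, hstep] at h1
      calc p (T^[m + 1 + (j + 1)] x₀) (T^[m + 1] x₀)
          ≤ k * (p (T^[m + 1 + j] x₀) (T^[m + 1] x₀) + a m) := h1
        _ ≤ k * (a m + a m) := by gcongr
        _ ≤ a m := by nlinarith [ha_nonneg m]
  have hcauchy : Tendsto (fun nm : ℕ × ℕ => p (T^[nm.1] x₀) (T^[nm.2] x₀)) atTop (𝓝 0) := by
    rw [Metric.tendsto_atTop]
    intro ε hε
    obtain ⟨N, hN⟩ := eventually_atTop.1 (ha_lim.eventually (gt_mem_nhds hε))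
    have key : ∀ n m, N + 1 ≤ m → m ≤ n → p (T^[n] x₀) (T^[m] x₀) < ε := by
      intro n m hm hmn
      obtain ⟨i, rfl⟩ := Nat.exists_eq_add_of_le' (le_trans (Nat.le_add_left 1 N) hm)
      obtain ⟨j, rfl⟩ := Nat.exists_eq_add_of_le hmn
      exact (horbit i j).trans_lt (hN i (by omega))
    refine ⟨(N + 1, N + 1), ?_⟩
    rintro ⟨n, m⟩ ⟨hn, hm⟩
    rw [Real.dist_eq, sub_zero, abs_of_nonneg (hp_nonneg _ _)]
    rcases le_total m n with h | h
    · exact key n m hm h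
    · rw [hP3]
      exact key m n hn h
  obtain ⟨u, hu, huu⟩ := hcomp (fun n => T^[n] x₀) hcauchy
  have eq_of_zero : ∀ x y, p x y = 0 → x = y := by
    intro x y h
    have hx := hP2 x y
    have hy := hP2 y x
    rw [hP3 y x] at hy
    exact (hP1 x y).1 ⟨by linarith [hp_nonneg x x], by linarith [hp_nonneg y y]⟩
  have hu_succ : Tendsto (fun n => p (T^[n + 1] x₀) u) atTop (𝓝 0) :=
    hu.comp (tendsto_add_atTop_nat 1)
  have hTu_bound : ∀ n, p (T u) u ≤
      θ (T u) u * (k * (p (T^[n + 1] x₀) u + a n) + p (T^[n + 1] x₀) u) := by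
    intro n
    have h1 := hT u (T^[n] x₀)
    rw [hstep, hP3 u] at h1
    have h2 := hP4 (T u) (T^[n + 1] x₀) u
    have h3 : 0 ≤ θ (T u) u := zero_le_one.trans (hθ _ _)
    calc p (T u) u ≤ θ (T u) u * (p (T u) (T^[n + 1] x₀) + p (T^[n + 1] x₀) u) := by
          linarith [hp_nonneg (T^[n + 1] x₀) (T^[n + 1] x₀)]
      _ ≤ _ := by gcongr
  have hTu : T u = u := by
    refine eq_of_zero _ _ (le_antisymm ?_ (hp_nonneg _ _))
    refine ge_of_tendsto' (x := atTop) (f := fun n =>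
      θ (T u) u * (k * (p (T^[n + 1] x₀) u + a n) + p (T^[n + 1] x₀) u)) ?_ hTu_bound
    simpa using (((hu_succ.add ha_lim).const_mul k).add hu_succ).const_mul (θ (T u) u)
  refine ⟨u, hTu, huu, fun v hv => eq_of_zero _ _ ?_, hu⟩
  have h := hT v u
  rw [hv, hTu, huu, add_zero] at h
  nlinarith [hp_nonneg v u]
end

section
/- Let (X, p, θ) be a partial extended b-metric space and let T : X → X satisfy the Kannan-type condition p(Tx, Ty) ≤ k[p(x, Tx) + p(y, Ty)] for all x,y ∈ X with k ∈ [0, 1/2). Then for any x₀ ∈ X the orbit xₙ = Tⁿx₀ is a 0-Cauchy sequence, i.e. lim_{n,m→∞} p(xₙ, xₘ) = 0. -/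
open Filter Topology

/-- Consecutive distances along the orbit of a Kannan-type contraction decay geometrically. -/
theorem kannan_orbit_step_le_geometric {X : Type*} {p : X → X → ℝ} {T : X → X} {k : ℝ}
    (hk0 : 0 ≤ k) (hk1 : k < 1)
    (hT : ∀ x y, p (T x) (T y) ≤ k * (p x (T x) + p y (T y))) (x₀ : X) (n : ℕ) :
    p (T^[n] x₀) (T (T^[n] x₀)) ≤ (k / (1 - k)) ^ n * p x₀ (T x₀) := by
  have hpos : 0 < 1 - k := by linarith
  induction n with
  | zero => simp
  | succ n ih =>
    have hstep : p (T^[n + 1] x₀) (T (T^[n + 1] x₀)) ≤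
        k / (1 - k) * p (T^[n] x₀) (T (T^[n] x₀)) := by
      have h := hT (T^[n] x₀) (T (T^[n] x₀))
      rw [Function.iterate_succ_apply', div_mul_eq_mul_div, le_div_iff₀ hpos]
      linarith
    calc p (T^[n + 1] x₀) (T (T^[n + 1] x₀))
        ≤ k / (1 - k) * p (T^[n] x₀) (T (T^[n] x₀)) := hstep
      _ ≤ k / (1 - k) * ((k / (1 - k)) ^ n * p x₀ (T x₀)) := by gcongr
      _ = (k / (1 - k)) ^ (n + 1) * p x₀ (T x₀) := by ring

/-- Consecutive distances along the orbit of a Kannan-type contraction tend to zero. -/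
theorem tendsto_kannan_orbit_step {X : Type*} {p : X → X → ℝ} {T : X → X} {k : ℝ}
    (hp : ∀ x y, 0 ≤ p x y) (hk0 : 0 ≤ k) (hk1 : k < 1 / 2)
    (hT : ∀ x y, p (T x) (T y) ≤ k * (p x (T x) + p y (T y))) (x₀ : X) :
    Tendsto (fun n : ℕ => p (T^[n] x₀) (T (T^[n] x₀))) atTop (𝓝 0) := by
  have hpos : 0 < 1 - k := by linarith
  have hr : k / (1 - k) < 1 := by rw [div_lt_one hpos]; linarith
  refine squeeze_zero (fun n => hp _ _)
    (kannan_orbit_step_le_geometric hk0 (by linarith) hT x₀) ?_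
  simpa using
    (tendsto_pow_atTop_nhds_zero_of_lt_one (div_nonneg hk0 hpos.le) hr).mul_const (p x₀ (T x₀))

/-- In a partial extended b-metric space, the orbit of a
Kannan-type contraction is a 0-Cauchy sequence. -/
theorem pebms_kannan_orbit_zero_cauchy
    {X : Type*}
    (p : X → X → ℝ) (θ : X → X → ℝ)
    (hθ : ∀ x y, 1 ≤ θ x y)
    (hp_nonneg : ∀ x y, 0 ≤ p x y)
    (hP1 : ∀ x y, (p x x = p x y ∧ p x y = p y y) ↔ x = y)
    (hP2 : ∀ x y, p x x ≤ p x y)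
    (hP3 : ∀ x y, p x y = p y x)
    (hP4 : ∀ x y z, p x z ≤ θ x z * (p x y + p y z) - p y y)
    (T : X → X) (k : ℝ) (hk0 : 0 ≤ k) (hk1 : k < 1/2)
    (hT : ∀ x y, p (T x) (T y) ≤ k * (p x (T x) + p y (T y)))
    (x₀ : X) :
    Tendsto (fun nm : ℕ × ℕ => p (T^[nm.1] x₀) (T^[nm.2] x₀)) atTop (𝓝 0) := by
  have hd := (tendsto_kannan_orbit_step hp_nonneg hk0 hk1 hT x₀).comp (tendsto_sub_atTop_nat 1)
  have hbound : Tendsto (fun nm : ℕ × ℕ =>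
      k * (p (T^[nm.1 - 1] x₀) (T (T^[nm.1 - 1] x₀)) +
        p (T^[nm.2 - 1] x₀) (T (T^[nm.2 - 1] x₀)))) atTop (𝓝 0) := by
    rw [← prod_atTop_atTop_eq]
    simpa using ((hd.comp tendsto_fst).add (hd.comp tendsto_snd)).const_mul k
  refine squeeze_zero' (Eventually.of_forall fun _ => hp_nonneg _ _) ?_ hbound
  filter_upwards [eventually_ge_atTop ((1, 1) : ℕ × ℕ)] with ⟨n, m⟩ ⟨hn, hm⟩
  obtain ⟨n, rfl⟩ := Nat.exists_eq_add_of_le' hn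
  obtain ⟨m, rfl⟩ := Nat.exists_eq_add_of_le' hm
  simpa only [Function.iterate_succ_apply', Nat.add_sub_cancel] using hT (T^[n] x₀) (T^[m] x₀)
end

section
/- Let (X, p, θ) be a partial extended b-metric space and let T : X → X satisfy p(Tx, Ty) ≤ k[p(x, Ty) + p(y, Ty)] for all x,y ∈ X with k ∈ [0, 1/2). For any x₀ ∈ X, writing xₙ = Tⁿx₀, the following inequality holds for all m, n ∈ ℕ with n ≥ 1: p(xₙ₊ₘ, xₙ) ≤ kᵐ · p(xₙ, xₙ) + ((1 − kᵐ⁺¹)/(1 − k)) · p(xₙ, xₙ₋₁). -/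
open Filter Topology

/-- If `p (T x) (T y) ≤ k * (p x (T y) + p y (T y))` with `0 ≤ k < 1`, then iterating `T` from `T y`
gives a geometric bound on the distance to `T y`. -/
theorem iterate_apply_le_geometric {X : Type*} {p : X → X → ℝ} {T : X → X} {k : ℝ}
    (hp_nonneg : ∀ x y, 0 ≤ p x y) (hk0 : 0 ≤ k) (hk1 : k < 1)
    (hT : ∀ x y, p (T x) (T y) ≤ k * (p x (T y) + p y (T y))) (y : X) (m : ℕ) :
    p (T^[m] (T y)) (T y) ≤
      k ^ m * p (T y) (T y) + (1 - k ^ (m + 1)) / (1 - k) * p y (T y) := by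
  have hk : 1 - k ≠ 0 := by linarith
  induction m with
  | zero => simp [hk, hp_nonneg]
  | succ m ih =>
    have hgeom : (1 - k ^ (m + 1 + 1)) / (1 - k) = 1 + k * ((1 - k ^ (m + 1)) / (1 - k)) := by
      field_simp
      ring
    have hd : k * p y (T y) ≤ p y (T y) := mul_le_of_le_one_left (hp_nonneg _ _) hk1.le
    rw [Function.iterate_succ_apply' T m, hgeom]
    generalize (1 - k ^ (m + 1)) / (1 - k) = s at ih ⊢
    rw [pow_succ]
    linarith [hT (T^[m] (T y)) y, mul_le_mul_of_nonneg_left ih hk0]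

/-- In a partial extended b-metric space, for a map satisfying
`p(Tx,Ty) ≤ k[p(x,Ty) + p(y,Ty)]`, one has the orbit estimate
`p(x_{n+m}, x_n) ≤ kᵐ p(x_n,x_n) + ((1-k^{m+1})/(1-k)) p(x_n, x_{n-1})`
for all `m` and all `n ≥ 1`. -/
theorem pebms_modified_kannan_orbit_estimate
    {X : Type*}
    (p : X → X → ℝ) (θ : X → X → ℝ)
    (hθ : ∀ x y, 1 ≤ θ x y)
    (hp_nonneg : ∀ x y, 0 ≤ p x y)
    (hP1 : ∀ x y, (p x x = p x y ∧ p x y = p y y) ↔ x = y)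
    (hP2 : ∀ x y, p x x ≤ p x y)
    (hP3 : ∀ x y, p x y = p y x)
    (hP4 : ∀ x y z, p x z ≤ θ x z * (p x y + p y z) - p y y)
    (T : X → X) (k : ℝ) (hk0 : 0 ≤ k) (hk1 : k < 1/2)
    (hT : ∀ x y, p (T x) (T y) ≤ k * (p x (T y) + p y (T y)))
    (x₀ : X) :
    ∀ m n : ℕ, 1 ≤ n →
      p (T^[n+m] x₀) (T^[n] x₀) ≤
        k^m * p (T^[n] x₀) (T^[n] x₀) +
          ((1 - k^(m+1)) / (1 - k)) * p (T^[n] x₀) (T^[n-1] x₀) := by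
  intro m n hn
  obtain ⟨n, rfl⟩ := Nat.exists_eq_add_of_le' hn
  have h := iterate_apply_le_geometric hp_nonneg hk0 (by linarith) hT (T^[n] x₀) m
  rw [← Function.iterate_succ_apply' T n, ← Function.iterate_add_apply, hP3 (T^[n] x₀)] at h
  rwa [add_comm (n + 1) m, Nat.add_sub_cancel]
end

section
/- Let (X, p, θ) be a partial extended b-metric space and let T : X → X satisfy p(Tx, Ty) ≤ k[p(x, Ty) + p(y, Ty)] for all x,y ∈ X with k ∈ [0, 1/2). For any x₀ ∈ X, writing xₙ = Tⁿx₀, the following inequality holds for all n ∈ ℕ: p(xₙ₊₁, xₙ) ≤ kⁿ · p(x₁, x₀) + k · Σ_{t=1}^{n} k^{n−t} · p(x_t, x_t). -/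
open Filter Topology

/-- In a partial extended b-metric space, for a map satisfying
`p(Tx,Ty) ≤ k[p(x,Ty) + p(y,Ty)]`, one has
`p(x_{n+1}, x_n) ≤ kⁿ p(x₁,x₀) + k Σ_{t=1}^{n} k^{n-t} p(x_t, x_t)`. -/
theorem pebms_modified_kannan_successive_estimate
    {X : Type*}
    (p : X → X → ℝ) (θ : X → X → ℝ)
    (hθ : ∀ x y, 1 ≤ θ x y)
    (hp_nonneg : ∀ x y, 0 ≤ p x y)
    (hP1 : ∀ x y, (p x x = p x y ∧ p x y = p y y) ↔ x = y)
    (hP2 : ∀ x y, p x x ≤ p x y)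
    (hP3 : ∀ x y, p x y = p y x)
    (hP4 : ∀ x y z, p x z ≤ θ x z * (p x y + p y z) - p y y)
    (T : X → X) (k : ℝ) (hk0 : 0 ≤ k) (hk1 : k < 1/2)
    (hT : ∀ x y, p (T x) (T y) ≤ k * (p x (T y) + p y (T y)))
    (x₀ : X) :
    ∀ n : ℕ, p (T^[n+1] x₀) (T^[n] x₀) ≤
      k^n * p (T^[1] x₀) x₀ +
        k * ∑ t ∈ Finset.Icc 1 n, k^(n-t) * p (T^[t] x₀) (T^[t] x₀) := by
  intro n
  induction n with
  | zero => simp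
  | succ n ih =>
    have hstep := hT (T^[n+1] x₀) (T^[n] x₀)
    rw [← Function.iterate_succ_apply' T, ← Function.iterate_succ_apply' T,
      hP3 (T^[n] x₀)] at hstep
    have hsum : ∑ t ∈ Finset.Icc 1 (n+1), k^(n+1-t) * p (T^[t] x₀) (T^[t] x₀) =
        k * ∑ t ∈ Finset.Icc 1 n, k^(n-t) * p (T^[t] x₀) (T^[t] x₀) +
          p (T^[n+1] x₀) (T^[n+1] x₀) := by
      rw [Finset.sum_Icc_succ_top (by omega), Finset.mul_sum, Nat.sub_self, pow_zero, one_mul]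
      congr 1
      refine Finset.sum_congr rfl fun t ht => ?_
      rw [Nat.succ_sub (Finset.mem_Icc.mp ht).2, pow_succ']
      ring
    rw [hsum, pow_succ']
    linarith [mul_le_mul_of_nonneg_left ih hk0]
end

section
/- Let (X, p, θ) be a partial extended b-metric space and let T : X → X satisfy p(Tx, Ty) ≤ k[p(x, Ty) + p(y, Ty)] for all x,y ∈ X with k ∈ [0, 1/2). If there exists x₀ ∈ X such that lim_{n→∞} n·p(Tⁿx₀, Tⁿx₀) = 0, then the orbit xₙ = Tⁿx₀ is a 0-Cauchy sequence, i.e. lim_{n,m→∞} p(xₙ, xₘ) = 0. -/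
open Filter Topology

/-- In a partial extended b-metric space, if `T` satisfies
`p(Tx,Ty) ≤ k[p(x,Ty) + p(y,Ty)]` with `k ∈ [0,1/2)` and
`n·p(Tⁿx₀,Tⁿx₀) → 0`, then the orbit of `x₀` is a 0-Cauchy sequence. -/
theorem pebms_modified_kannan_orbit_zero_cauchy
    {X : Type*}
    (p : X → X → ℝ) (θ : X → X → ℝ)
    (hθ : ∀ x y, 1 ≤ θ x y)
    (hp_nonneg : ∀ x y, 0 ≤ p x y)
    (hP1 : ∀ x y, (p x x = p x y ∧ p x y = p y y) ↔ x = y)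
    (hP2 : ∀ x y, p x x ≤ p x y)
    (hP3 : ∀ x y, p x y = p y x)
    (hP4 : ∀ x y z, p x z ≤ θ x z * (p x y + p y z) - p y y)
    (T : X → X) (k : ℝ) (hk0 : 0 ≤ k) (hk1 : k < 1/2)
    (hT : ∀ x y, p (T x) (T y) ≤ k * (p x (T y) + p y (T y)))
    (x₀ : X)
    (hx₀ : Tendsto (fun n : ℕ => (n : ℝ) * p (T^[n] x₀) (T^[n] x₀)) atTop (𝓝 0)) :
    Tendsto (fun nm : ℕ × ℕ => p (T^[nm.1] x₀) (T^[nm.2] x₀)) atTop (𝓝 0) := by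
  have hstep : ∀ m n : ℕ, p (T^[m+1] x₀) (T^[n+1] x₀) ≤
      k * (p (T^[m] x₀) (T^[n+1] x₀) + p (T^[n] x₀) (T^[n+1] x₀)) := fun m n => by
    have h := hT (T^[m] x₀) (T^[n] x₀)
    simpa only [← Function.iterate_succ_apply'] using h
  set d₀ : ℝ := p (T^[0] x₀) (T^[0+1] x₀)
  have hd : ∀ n : ℕ, p (T^[n] x₀) (T^[n+1] x₀) ≤ (2 * k) ^ n * d₀ := by
    intro n
    induction n with
    | zero => simp [d₀]
    | succ n ih =>
      have h₁ := hstep (n + 1) n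
      rw [hP3 (T^[n+1+1] x₀)] at h₁
      have h₂ := hP2 (T^[n+1] x₀) (T^[n] x₀)
      rw [hP3 (T^[n+1] x₀) (T^[n] x₀)] at h₂
      calc p (T^[n+1] x₀) (T^[n+1+1] x₀)
          ≤ k * (p (T^[n+1] x₀) (T^[n+1] x₀) + p (T^[n] x₀) (T^[n+1] x₀)) := h₁
        _ ≤ k * ((2 * k) ^ n * d₀ + (2 * k) ^ n * d₀) := by gcongr; exact h₂.trans ih
        _ = (2 * k) ^ (n + 1) * d₀ := by ring
  have hrow : ∀ m n : ℕ, p (T^[m+1] x₀) (T^[n+1] x₀) ≤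
      k ^ m * p (T^[0+1] x₀) (T^[n+1] x₀) + p (T^[n] x₀) (T^[n+1] x₀) := by
    intro m n
    induction m with
    | zero => simpa using hp_nonneg (T^[n] x₀) (T^[n+1] x₀)
    | succ m ih =>
      have h₁ := hstep (m + 1) n
      have h₂ := mul_le_mul_of_nonneg_left ih hk0
      have h₃ := hp_nonneg (T^[n] x₀) (T^[n+1] x₀)
      rw [pow_succ]
      nlinarith
  have hbdd : ∀ n : ℕ, p (T^[0+1] x₀) (T^[n+1] x₀) ≤ 2 * d₀ := by
    intro n
    have h₁ := hrow n 0
    have h₂ : p (T^[0+1] x₀) (T^[0+1] x₀) ≤ d₀ := by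
      have h := hP2 (T^[0+1] x₀) (T^[0] x₀)
      rwa [hP3 (T^[0+1] x₀) (T^[0] x₀)] at h
    have h₃ := mul_le_of_le_one_left (hp_nonneg (T^[0+1] x₀) (T^[0+1] x₀))
      (pow_le_one₀ hk0 (by linarith : k ≤ 1) (n := n))
    rw [hP3]
    linarith
  have hfst : Tendsto (fun nm : ℕ × ℕ => nm.1 - 1) atTop atTop :=
    (tendsto_sub_atTop_nat 1).comp (prod_atTop_atTop_eq (α := ℕ) (β := ℕ) ▸ tendsto_fst)
  have hsnd : Tendsto (fun nm : ℕ × ℕ => nm.2 - 1) atTop atTop :=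
    (tendsto_sub_atTop_nat 1).comp (prod_atTop_atTop_eq (α := ℕ) (β := ℕ) ▸ tendsto_snd)
  have hlim : Tendsto (fun nm : ℕ × ℕ => k ^ (nm.1 - 1) * (2 * d₀) + (2 * k) ^ (nm.2 - 1) * d₀)
      atTop (𝓝 0) := by
    have h₁ := (tendsto_pow_atTop_nhds_zero_of_lt_one hk0 (by linarith)).comp hfst
    have h₂ := (tendsto_pow_atTop_nhds_zero_of_lt_one
      (by linarith : 0 ≤ 2 * k) (by linarith)).comp hsnd
    simpa using (h₁.mul_const (2 * d₀)).add (h₂.mul_const d₀)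
  refine squeeze_zero' (Eventually.of_forall fun _ => hp_nonneg _ _) ?_ hlim
  filter_upwards [eventually_ge_atTop ((1, 1) : ℕ × ℕ)] with ⟨m, n⟩ hmn
  obtain ⟨m, rfl⟩ := Nat.exists_eq_add_of_le' hmn.1
  obtain ⟨n, rfl⟩ := Nat.exists_eq_add_of_le' hmn.2
  exact (hrow m n).trans
    (add_le_add (mul_le_mul_of_nonneg_left (hbdd n) (pow_nonneg hk0 m)) (hd n))
end

section
/- Let (X, d, θ) be a complete extended b-metric space such that d is sequentially continuous, and let T : X → X satisfy d(Tx, Ty) ≤ k·d(x,y) for all x,y ∈ X, where k ∈ [0,1). Suppose that for each x₀ ∈ X, writing xₙ = Tⁿx₀, one has lim sup_{n,m→∞} θ(xₙ, xₘ) < 1/k (i.e., there is c with k·c < 1 such that θ(xₙ, xₘ) ≤ c for all sufficiently large n, m). Then T has exactly one fixed point u ∈ X, and for each y ∈ X, d(Tⁿy, u) → 0 as n → ∞. -/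
open Filter Topology

/-- A `k`-contraction for `d` has iterates contracting by `k ^ n`. -/
theorem dist_iterate_le_pow_mul {X : Type*} {d : X → X → ℝ} {T : X → X} {k : ℝ} (hk0 : 0 ≤ k)
    (hT : ∀ x y, d (T x) (T y) ≤ k * d x y) (n : ℕ) (x y : X) :
    d (T^[n] x) (T^[n] y) ≤ k ^ n * d x y := by
  induction n with
  | zero => simp
  | succ n ih =>
    rw [Function.iterate_succ_apply', Function.iterate_succ_apply', pow_succ', mul_assoc]
    exact (hT _ _).trans (mul_le_mul_of_nonneg_left ih hk0)

/-- If `θ z (T^[n] z) ≤ c` along the orbit of `z` and `k * c < 1`, then the orbit is bounded. -/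
theorem dist_self_iterate_le {X : Type*} {d θ : X → X → ℝ}
    (hd_nonneg : ∀ x y, 0 ≤ d x y) (hd_self : ∀ x, d x x = 0)
    (hd_tri : ∀ x y z, d x z ≤ θ x z * (d x y + d y z))
    {T : X → X} {k c : ℝ} (hk0 : 0 ≤ k) (hT : ∀ x y, d (T x) (T y) ≤ k * d x y)
    {z : X} (hc0 : 0 ≤ c) (hkc : k * c < 1) (hθc : ∀ n, θ z (T^[n] z) ≤ c) (n : ℕ) :
    d z (T^[n] z) ≤ c * d z (T z) / (1 - k * c) := by
  have hpos : 0 < 1 - k * c := by linarith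
  induction n with
  | zero =>
    rw [Function.iterate_zero_apply, hd_self]
    exact div_nonneg (mul_nonneg hc0 (hd_nonneg _ _)) hpos.le
  | succ n ih =>
    have hstep : d (T z) (T^[n + 1] z) ≤ k * d z (T^[n] z) := by
      rw [Function.iterate_succ_apply']
      exact hT _ _
    calc d z (T^[n + 1] z)
        ≤ θ z (T^[n + 1] z) * (d z (T z) + d (T z) (T^[n + 1] z)) := hd_tri _ _ _
      _ ≤ c * (d z (T z) + d (T z) (T^[n + 1] z)) :=
          mul_le_mul_of_nonneg_right (hθc _) (add_nonneg (hd_nonneg _ _) (hd_nonneg _ _))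
      _ ≤ c * (d z (T z) + k * (c * d z (T z) / (1 - k * c))) := by
          gcongr
          exact hstep.trans (mul_le_mul_of_nonneg_left ih hk0)
      _ = c * d z (T z) / (1 - k * c) := by
          have hne : 1 - k * c ≠ 0 := hpos.ne'
          rw [eq_div_iff hne, mul_add, add_mul, mul_assoc c (k * _), mul_assoc k,
            div_mul_cancel₀ _ hne]
          ring

/-- A bounded orbit of a contraction is a Cauchy sequence. -/
theorem tendsto_dist_iterate_iterate {X : Type*} {d : X → X → ℝ}
    (hd_nonneg : ∀ x y, 0 ≤ d x y) (hd_symm : ∀ x y, d x y = d y x)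
    {T : X → X} {k B : ℝ} (hk0 : 0 ≤ k) (hk1 : k < 1)
    (hT : ∀ x y, d (T x) (T y) ≤ k * d x y) {z : X} (hB : ∀ n, d z (T^[n] z) ≤ B) :
    Tendsto (fun nm : ℕ × ℕ => d (T^[nm.1] z) (T^[nm.2] z)) atTop (𝓝 0) := by
  have hB0 : 0 ≤ B := (hd_nonneg _ _).trans (hB 0)
  have hle : ∀ n p, d (T^[n] z) (T^[n + p] z) ≤ k ^ n * B := fun n p => by
    rw [Function.iterate_add_apply]
    exact (dist_iterate_le_pow_mul hk0 hT n _ _).trans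
      (mul_le_mul_of_nonneg_left (hB p) (pow_nonneg hk0 n))
  have hpow : Tendsto (fun n : ℕ => k ^ n * B) atTop (𝓝 0) := by
    simpa using (tendsto_pow_atTop_nhds_zero_of_lt_one hk0 hk1).mul_const B
  have hsum : Tendsto (fun nm : ℕ × ℕ => k ^ nm.1 * B + k ^ nm.2 * B) atTop (𝓝 0) := by
    rw [← prod_atTop_atTop_eq]
    simpa using (hpow.comp tendsto_fst).add (hpow.comp tendsto_snd)
  refine squeeze_zero (fun _ => hd_nonneg _ _) (fun ⟨n, m⟩ => ?_) hsum
  have hn : 0 ≤ k ^ n * B := mul_nonneg (pow_nonneg hk0 n) hB0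
  have hm : 0 ≤ k ^ m * B := mul_nonneg (pow_nonneg hk0 m) hB0
  rcases le_total n m with h | h
  · obtain ⟨p, rfl⟩ := Nat.exists_eq_add_of_le h
    exact (hle n p).trans (le_add_of_nonneg_right hm)
  · obtain ⟨p, rfl⟩ := Nat.exists_eq_add_of_le h
    rw [hd_symm]
    exact (hle m p).trans (le_add_of_nonneg_left hn)

/-- Banach-type fixed point theorem in a complete extended
b-metric space with sequentially continuous metric (Kamran et al.). -/
theorem ebms_banach_fixed_point
    {X : Type*} [Nonempty X]
    (d : X → X → ℝ) (θ : X → X → ℝ)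
    (hθ : ∀ x y, 1 ≤ θ x y)
    (hd_nonneg : ∀ x y, 0 ≤ d x y)
    (hd_eq : ∀ x y, d x y = 0 ↔ x = y)
    (hd_symm : ∀ x y, d x y = d y x)
    (hd_tri : ∀ x y z, d x z ≤ θ x z * (d x y + d y z))
    (hd_cont : ∀ (x y : ℕ → X) (a b : X),
      Tendsto (fun n => d (x n) a) atTop (𝓝 0) →
      Tendsto (fun n => d (y n) b) atTop (𝓝 0) →
      Tendsto (fun n => d (x n) (y n)) atTop (𝓝 (d a b)))
    (hcomplete : ∀ s : ℕ → X,
      Tendsto (fun nm : ℕ × ℕ => d (s nm.1) (s nm.2)) atTop (𝓝 0) →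
      ∃ a : X, Tendsto (fun n => d (s n) a) atTop (𝓝 0))
    (T : X → X) (k : ℝ) (hk0 : 0 ≤ k) (hk1 : k < 1)
    (hT : ∀ x y, d (T x) (T y) ≤ k * d x y)
    (hθlim : ∀ x₀ : X, ∃ c : ℝ, k * c < 1 ∧
      ∃ N : ℕ, ∀ n ≥ N, ∀ m ≥ N, θ (T^[n] x₀) (T^[m] x₀) ≤ c) :
    ∃ u : X, T u = u ∧ (∀ v : X, T v = v → v = u) ∧
      ∀ y : X, Tendsto (fun n => d (T^[n] y) u) atTop (𝓝 0) := by
  have hd_self : ∀ x, d x x = 0 := fun x => (hd_eq x x).2 rfl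
  obtain ⟨x₀⟩ := ‹Nonempty X›
  obtain ⟨c, hkc, N, hN⟩ := hθlim x₀
  have hθc : ∀ n, θ (T^[N] x₀) (T^[n] (T^[N] x₀)) ≤ c := fun n => by
    rw [← Function.iterate_add_apply]
    exact hN N le_rfl (n + N) (Nat.le_add_left N n)
  have hc0 : 0 ≤ c := zero_le_one.trans ((hθ _ _).trans (hθc 0))
  obtain ⟨u, hu⟩ := hcomplete (fun n => T^[n] (T^[N] x₀))
    (tendsto_dist_iterate_iterate hd_nonneg hd_symm hk0 hk1 hT
      (dist_self_iterate_le hd_nonneg hd_self hd_tri hk0 hT hc0 hkc hθc))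
  have hTu : Tendsto (fun n => d (T^[n + 1] (T^[N] x₀)) (T u)) atTop (𝓝 0) := by
    refine squeeze_zero (fun _ => hd_nonneg _ _) (fun n => ?_) (by simpa using hu.const_mul k)
    rw [Function.iterate_succ_apply']
    exact hT _ _
  have hfix : T u = u := by
    have h := hd_cont _ _ _ _ hTu (hu.comp (tendsto_add_atTop_nat 1))
    simp only [hd_self] at h
    exact (hd_eq _ _).1 (tendsto_nhds_unique h tendsto_const_nhds)
  refine ⟨u, hfix, fun v hv => (hd_eq _ _).1 ?_, fun y => ?_⟩
  · have h := hT v u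
    rw [hv, hfix] at h
    nlinarith [hd_nonneg v u]
  · refine squeeze_zero (g := fun n => k ^ n * d y u) (fun _ => hd_nonneg _ _) (fun n => ?_)
      (by simpa using (tendsto_pow_atTop_nhds_zero_of_lt_one hk0 hk1).mul_const (d y u))
    have h := dist_iterate_le_pow_mul hk0 hT n y u
    rwa [Function.iterate_fixed hfix] at h
end
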